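/- Let α, β, γ, w ∈ ℂ with none of α, β, γ a nonpositive integer, and let k ∈ (0,1). Define f̃_{m,n} and c̃_n as in the context. Then the sequence {c̃_n} satisfies the recurrence of the local Heun solution with δ = β + 1: c̃_0 = 1, γ·c̃_1 = βγ − w, and for every n ≥ 1: (n−1+α)(n−1+β)·c̃_{n−1} − [ n·((n−1+γ)(1 + 1/k²) + (β+1)/k² + α − γ) + (βγ − w)/k² ]·c̃_n + ((n+1)(n+γ)/k²)·c̃_{n+1} = 0. Consequently Σ c̃_n z^n is the local Heun solution Hℓ(1/k², −(w−βγ)/k²; α, β, γ, β+1; z). -/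

import Mathlib

/-- The Pochhammer symbol `(x)_n = x(x+1)⋯(x+n-1)`. -/
noncomputable def poch (x : ℂ) (n : ℕ) : ℂ := ∏ i ∈ Finset.range n, (x + (i : ℂ))

/-- The index set of tuples `(ℓ_1, j_1, …, ℓ_m, j_m)` with
`0 ≤ ℓ_1 ≤ j_1 < ℓ_2 ≤ j_2 < ⋯ < ℓ_m ≤ j_m < n`, encoded as pairs of functions
`(ℓ, j) : (Fin m → Fin n) × (Fin m → Fin n)`. -/
def heunIdx (m n : ℕ) : Finset ((Fin m → Fin n) × (Fin m → Fin n)) :=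
  Finset.univ.filter fun p =>
    (∀ s : Fin m, (p.1 s : ℕ) ≤ (p.2 s : ℕ)) ∧
    (∀ s t : Fin m, (s : ℕ) + 1 = (t : ℕ) → (p.2 s : ℕ) < (p.1 t : ℕ))

/-- The coefficients `f̃_{m,n}` for the case `δ = β + 1`: `f̃_{0,n} = 1`; for
`1 ≤ m ≤ n`, `f̃_{m,n} = (-1)^m Σ ∏_{s=1}^m [j_s!(α)_{j_s}(β)_{ℓ_s}(γ)_{ℓ_s} /
(ℓ_s!(α)_{ℓ_s}(β)_{j_s+1}(γ)_{j_s+1})] k^{2(j_s-ℓ_s)}`, the sum running over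
`heunIdx m n`; and `f̃_{m,n} = 0` for `m < 0` or `m > n`. -/
noncomputable def heunft (k : ℝ) (α β γ : ℂ) (m : ℤ) (n : ℕ) : ℂ :=
  if m = 0 then 1
  else if m < 0 ∨ (n : ℤ) < m then 0
  else (-1 : ℂ) ^ m.toNat *
    ∑ p ∈ heunIdx m.toNat n, ∏ s : Fin m.toNat,
      ((Nat.factorial (p.2 s : ℕ) : ℂ) * poch α (p.2 s : ℕ) * poch β (p.1 s : ℕ) *
          poch γ (p.1 s : ℕ)) /
        ((Nat.factorial (p.1 s : ℕ) : ℂ) * poch α (p.1 s : ℕ) * poch β ((p.2 s : ℕ) + 1) *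
          poch γ ((p.2 s : ℕ) + 1)) *
      (k : ℂ) ^ ((2 : ℤ) * (((p.2 s : ℕ) : ℤ) - ((p.1 s : ℕ) : ℤ)))

/-- The Taylor coefficients `c̃_n = ((β)_n / n!) Σ_{m=0}^n f̃_{m,n} wᵐ` of the local
Heun solution for `δ = β + 1`. -/
noncomputable def heunct (k : ℝ) (α β γ w : ℂ) (n : ℕ) : ℂ :=
  poch β n / (Nat.factorial n : ℂ) *
    ∑ m ∈ Finset.range (n + 1), heunft k α β γ (m : ℤ) n * w ^ m


/-- One factor of the product. -/
noncomputable def hT (k : ℝ) (α β γ : ℂ) (l j : ℕ) : ℂ :=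
  ((Nat.factorial j : ℂ) * poch α j * poch β l * poch γ l) /
    ((Nat.factorial l : ℂ) * poch α l * poch β (j + 1) * poch γ (j + 1)) *
    (k : ℂ) ^ ((2 : ℤ) * ((j : ℤ) - (l : ℤ)))

/-- Index set with natural number valued functions. -/
def hN (m n : ℕ) : Finset ((Fin m → ℕ) × (Fin m → ℕ)) :=
  ((Fintype.piFinset fun _ => Finset.range n) ×ˢ (Fintype.piFinset fun _ => Finset.range n)).filter
    fun p => (∀ s : Fin m, p.1 s ≤ p.2 s) ∧
      (∀ s t : Fin m, (s : ℕ) + 1 = (t : ℕ) → p.2 s < p.1 t)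

lemma mem_hN {m n : ℕ} (p : (Fin m → ℕ) × (Fin m → ℕ)) :
    p ∈ hN m n ↔ (∀ s, p.2 s < n) ∧ (∀ s : Fin m, p.1 s ≤ p.2 s) ∧
      (∀ s t : Fin m, (s : ℕ) + 1 = (t : ℕ) → p.2 s < p.1 t) := by
  simp only [hN, Finset.mem_filter, Finset.mem_product, Fintype.mem_piFinset, Finset.mem_range]
  constructor
  · rintro ⟨⟨_, h2⟩, h3, h4⟩
    exact ⟨h2, h3, h4⟩
  · rintro ⟨h2, h3, h4⟩
    exact ⟨⟨fun s => (h3 s).trans_lt (h2 s), h2⟩, h3, h4⟩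

lemma hN_chain {m : ℕ} (p : (Fin m → ℕ) × (Fin m → ℕ))
    (h3 : ∀ s : Fin m, p.1 s ≤ p.2 s)
    (h4 : ∀ s t : Fin m, (s : ℕ) + 1 = (t : ℕ) → p.2 s < p.1 t) (d : ℕ) :
    ∀ s t : Fin m, (s : ℕ) + 1 + d = (t : ℕ) → p.2 s + d < p.1 t := by
  induction d with
  | zero => intro s t h; exact h4 s t h
  | succ d ih =>
    intro s t h
    have ht := t.2
    have h1 := ih s ⟨(s : ℕ) + 1 + d, by omega⟩ rfl
    have h2 := h4 ⟨(s : ℕ) + 1 + d, by omega⟩ t h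
    have h5 := h3 ⟨(s : ℕ) + 1 + d, by omega⟩
    omega

lemma hN_empty {m n : ℕ} (h : n < m) : hN m n = ∅ := by
  rw [Finset.eq_empty_iff_forall_notMem]
  intro p hp
  obtain ⟨h2, h3, h4⟩ := (mem_hN p).1 hp
  have hl := h2 ⟨m - 1, by omega⟩
  have hl' := h3 ⟨m - 1, by omega⟩
  rcases Nat.lt_or_ge 1 m with h1 | h1
  · have := hN_chain p h3 h4 (m - 2) ⟨0, by omega⟩ ⟨m - 1, by omega⟩ (by simp; omega)
    omega
  · omega

/-- The unsigned coefficient. -/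
noncomputable def hG (k : ℝ) (α β γ : ℂ) (m n : ℕ) : ℂ :=
  ∑ p ∈ hN m n, ∏ s : Fin m, hT k α β γ (p.1 s) (p.2 s)

lemma sum_heunIdx (k : ℝ) (α β γ : ℂ) (m n : ℕ) :
    ∑ p ∈ heunIdx m n, ∏ s : Fin m, hT k α β γ (p.1 s : ℕ) (p.2 s : ℕ) = hG k α β γ m n := by
  unfold hG
  refine Finset.sum_bij (fun p _ => (fun s => (p.1 s : ℕ), fun s => (p.2 s : ℕ))) ?_ ?_ ?_ ?_
  · intro p hp
    simp only [heunIdx, Finset.mem_filter, Finset.mem_univ, true_and] at hp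
    rw [mem_hN]
    exact ⟨fun s => (p.2 s).2, hp.1, hp.2⟩
  · rintro ⟨p1, p2⟩ _ ⟨q1, q2⟩ _ h
    simp only [Prod.mk.injEq] at h
    refine Prod.ext ?_ ?_
    · funext s; exact Fin.ext (congrFun h.1 s)
    · funext s; exact Fin.ext (congrFun h.2 s)
  · intro p hp
    obtain ⟨h2, h3, h4⟩ := (mem_hN p).1 hp
    refine ⟨(fun s => ⟨p.1 s, (h3 s).trans_lt (h2 s)⟩, fun s => ⟨p.2 s, h2 s⟩), ?_, rfl⟩
    simp only [heunIdx, Finset.mem_filter, Finset.mem_univ, true_and]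
    exact ⟨h3, h4⟩
  · intro p _
    rfl

lemma hG_zero (k : ℝ) (α β γ : ℂ) (n : ℕ) : hG k α β γ 0 n = 1 := by
  have h : hN 0 n = {(Fin.elim0, Fin.elim0)} := by
    ext p
    rw [mem_hN]
    simp only [Finset.mem_singleton]
    constructor
    · intro _; exact Subsingleton.elim _ _
    · intro _; exact ⟨fun s => s.elim0, fun s => s.elim0, fun s => s.elim0⟩
  unfold hG
  rw [h]
  simp

lemma hG_big (k : ℝ) (α β γ : ℂ) {m n : ℕ} (h : n < m) : hG k α β γ m n = 0 := by
  unfold hG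
  rw [hN_empty h]
  simp

lemma heunft_eq (k : ℝ) (α β γ : ℂ) (m n : ℕ) :
    heunft k α β γ (m : ℤ) n = (-1) ^ m * hG k α β γ m n := by
  unfold heunft
  split_ifs with h1 h2
  · have : m = 0 := by omega
    subst this
    simp [hG_zero]
  · rw [hG_big k α β γ (by omega)]; simp
  · rw [← sum_heunIdx]
    rfl

lemma hG_succ (k : ℝ) (α β γ : ℂ) (m n : ℕ) :
    hG k α β γ (m + 1) n = ∑ j ∈ Finset.range n, ∑ l ∈ Finset.range (j + 1),
      hT k α β γ l j * hG k α β γ m l := by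
  unfold hG
  simp_rw [Finset.mul_sum]
  simp_rw [Finset.sum_sigma']
  refine Finset.sum_bij'
    (fun p _ => ⟨p.2 (Fin.last m), ⟨p.1 (Fin.last m),
      (fun s => p.1 s.castSucc, fun s => p.2 s.castSucc)⟩⟩)
    (fun q _ => (Fin.snoc (α := fun _ => ℕ) q.2.2.1 q.2.1, Fin.snoc (α := fun _ => ℕ) q.2.2.2 q.1))
    ?_ ?_ ?_ ?_ ?_
  · intro p hp
    obtain ⟨h2, h3, h4⟩ := (mem_hN p).1 hp
    simp only [Finset.mem_sigma, Finset.mem_range, mem_hN]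
    refine ⟨h2 _, Nat.lt_succ_of_le (h3 _), ?_, fun s => h3 _, fun s t h => h4 _ _ (by simpa using h)⟩
    intro s
    have := hN_chain p h3 h4 (m - s - 1) s.castSucc (Fin.last m)
      (by have := s.2; simp only [Fin.val_castSucc, Fin.val_last]; omega)
    omega
  · rintro ⟨j, l, p⟩ hq
    simp only [Finset.mem_sigma, Finset.mem_range, mem_hN] at hq
    obtain ⟨hj, hl, h2, h3, h4⟩ := hq
    rw [mem_hN]
    refine ⟨?_, ?_, ?_⟩
    · intro s
      refine Fin.lastCases ?_ (fun s => ?_) s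
      · simpa using hj
      · have := h2 s
        simp only [Fin.snoc_castSucc]; omega
    · intro s
      refine Fin.lastCases ?_ (fun s => ?_) s
      · simp only [Fin.snoc_last]; omega
      · have := h3 s
        simpa using this
    · intro s t
      refine Fin.lastCases ?_ (fun s => ?_) s
      · intro h
        have := t.2
        simp only [Fin.val_last] at h; omega
      · refine Fin.lastCases ?_ (fun t => ?_) t
        · intro _
          have := h2 s
          simpa using this
        · intro h
          have := h4 s t (by simpa using h)
          simpa using this
  · rintro ⟨p1, p2⟩ _
    refine Prod.ext ?_ ?_
    · exact Fin.snoc_init_self (α := fun _ => ℕ) p1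
    · exact Fin.snoc_init_self (α := fun _ => ℕ) p2
  · rintro ⟨j, l, p⟩ _
    simp
  · intro p _
    rw [Fin.prod_univ_castSucc, mul_comm]

/-- The power series coefficient without prefactor. -/
noncomputable def hS (k : ℝ) (α β γ w : ℂ) (n : ℕ) : ℂ :=
  ∑ m ∈ Finset.range (n + 1), (-w) ^ m * hG k α β γ m n

lemma hS_eq (k : ℝ) (α β γ w : ℂ) {n M : ℕ} (h : n + 1 ≤ M) :
    hS k α β γ w n = ∑ m ∈ Finset.range M, (-w) ^ m * hG k α β γ m n := by
  unfold hS
  refine Finset.sum_subset (Finset.range_mono h) ?_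
  intro m _ hm
  rw [Finset.mem_range, not_lt] at hm
  rw [hG_big k α β γ (by omega), mul_zero]

lemma heunct_eq (k : ℝ) (α β γ w : ℂ) (n : ℕ) :
    heunct k α β γ w n = poch β n / (Nat.factorial n : ℂ) * hS k α β γ w n := by
  unfold heunct hS
  congr 1
  refine Finset.sum_congr rfl fun m _ => ?_
  rw [heunft_eq, neg_pow w]
  ring

lemma hS_diff (k : ℝ) (α β γ w : ℂ) (n : ℕ) :
    hS k α β γ w (n + 1) = hS k α β γ w n -
      w * ∑ l ∈ Finset.range (n + 1), hT k α β γ l n * hS k α β γ w l := by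
  rw [hS_eq k α β γ w (n := n + 1) (M := n + 1 + 1) le_rfl,
    hS_eq k α β γ w (n := n) (M := n + 1 + 1) (by omega)]
  have h : ∑ l ∈ Finset.range (n + 1), hT k α β γ l n * hS k α β γ w l =
      ∑ m ∈ Finset.range (n + 1), (-w) ^ m *
        ∑ l ∈ Finset.range (n + 1), hT k α β γ l n * hG k α β γ m l := by
    simp_rw [Finset.mul_sum]
    rw [Finset.sum_comm]
    refine Finset.sum_congr rfl fun l hl => ?_
    rw [hS_eq k α β γ w (n := l) (M := n + 1) (by rw [Finset.mem_range] at hl; omega),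
      Finset.mul_sum]
    refine Finset.sum_congr rfl fun m _ => ?_
    ring
  rw [h, Finset.sum_range_succ' _ (n + 1), Finset.sum_range_succ' _ (n + 1), hG_zero, hG_zero]
  have g : ∀ m, hG k α β γ (m + 1) (n + 1) = hG k α β γ (m + 1) n +
      ∑ l ∈ Finset.range (n + 1), hT k α β γ l n * hG k α β γ m l := by
    intro m
    rw [hG_succ, Finset.sum_range_succ, ← hG_succ]
  have e : ∑ m ∈ Finset.range (n + 1), (-w) ^ (m + 1) * hG k α β γ (m + 1) (n + 1) =
      ∑ m ∈ Finset.range (n + 1), (-w) ^ (m + 1) * hG k α β γ (m + 1) n -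
      w * ∑ m ∈ Finset.range (n + 1), (-w) ^ m *
        ∑ l ∈ Finset.range (n + 1), hT k α β γ l n * hG k α β γ m l := by
    rw [Finset.mul_sum, ← Finset.sum_sub_distrib]
    refine Finset.sum_congr rfl fun m _ => ?_
    rw [g]
    ring
  rw [e]
  ring

lemma poch_succ (x : ℂ) (n : ℕ) : poch x (n + 1) = poch x n * (x + n) := by
  unfold poch
  rw [Finset.prod_range_succ]

lemma poch_ne (x : ℂ) (hx : ∀ j : ℕ, x ≠ -(j : ℂ)) (n : ℕ) : poch x n ≠ 0 := by
  unfold poch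
  rw [Finset.prod_ne_zero_iff]
  intro i _ h
  exact hx i (eq_neg_of_add_eq_zero_left h)

lemma hT_diag (k : ℝ) (α β γ : ℂ)
    (hα : ∀ j : ℕ, α ≠ -(j : ℂ)) (hβ : ∀ j : ℕ, β ≠ -(j : ℂ))
    (hγ : ∀ j : ℕ, γ ≠ -(j : ℂ)) (n : ℕ) :
    (β + n) * (γ + n) * hT k α β γ n n = 1 := by
  have h1 := poch_ne α hα n
  have h2 := poch_ne β hβ n
  have h3 := poch_ne γ hγ n
  have h4 : (Nat.factorial n : ℂ) ≠ 0 := by exact_mod_cast Nat.factorial_ne_zero n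
  have h5 : β + n ≠ 0 := fun h => hβ n (eq_neg_of_add_eq_zero_left h)
  have h6 : γ + n ≠ 0 := fun h => hγ n (eq_neg_of_add_eq_zero_left h)
  unfold hT
  rw [poch_succ, poch_succ, sub_self, mul_zero, zpow_zero]
  field_simp

lemma hT_step (k : ℝ) (hk : (k : ℂ) ≠ 0) (α β γ : ℂ)
    (hα : ∀ j : ℕ, α ≠ -(j : ℂ)) (hβ : ∀ j : ℕ, β ≠ -(j : ℂ))
    (hγ : ∀ j : ℕ, γ ≠ -(j : ℂ)) (l n : ℕ) :
    (β + (n + 1)) * (γ + (n + 1)) * hT k α β γ l (n + 1) =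
      (n + 1) * (α + n) * (k : ℂ) ^ 2 * hT k α β γ l n := by
  have h1 := poch_ne α hα l
  have h2 := poch_ne β hβ (n + 1)
  have h3 := poch_ne γ hγ (n + 1)
  have h4 : (Nat.factorial l : ℂ) ≠ 0 := by exact_mod_cast Nat.factorial_ne_zero l
  have h5 : β + (n + 1) ≠ 0 := fun h => hβ (n + 1) (by
    push_cast; exact eq_neg_of_add_eq_zero_left h)
  have h6 : γ + (n + 1) ≠ 0 := fun h => hγ (n + 1) (by
    push_cast; exact eq_neg_of_add_eq_zero_left h)
  unfold hT
  have hz : (k : ℂ) ^ ((2 : ℤ) * (((n + 1 : ℕ) : ℤ) - (l : ℤ))) =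
      (k : ℂ) ^ 2 * (k : ℂ) ^ ((2 : ℤ) * ((n : ℤ) - (l : ℤ))) := by
    rw [← zpow_natCast (k : ℂ) 2, ← zpow_add₀ hk]
    congr 1
    push_cast
    ring
  rw [hz, poch_succ β (n + 1), poch_succ γ (n + 1), poch_succ α n, Nat.factorial_succ]
  push_cast
  generalize (k : ℂ) ^ ((2 : ℤ) * ((n : ℤ) - (l : ℤ))) = z
  field_simp

lemma hS_rec (k : ℝ) (hk : (k : ℂ) ≠ 0) (α β γ w : ℂ)
    (hα : ∀ j : ℕ, α ≠ -(j : ℂ)) (hβ : ∀ j : ℕ, β ≠ -(j : ℂ))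
    (hγ : ∀ j : ℕ, γ ≠ -(j : ℂ)) (n : ℕ) :
    (β + (n + 1)) * (γ + (n + 1)) * (hS k α β γ w (n + 2) - hS k α β γ w (n + 1)) =
      (n + 1) * (α + n) * (k : ℂ) ^ 2 * (hS k α β γ w (n + 1) - hS k α β γ w n)
        - w * hS k α β γ w (n + 1) := by
  have e1 := hS_diff k α β γ w (n + 1)
  have e2 := hS_diff k α β γ w n
  rw [Finset.sum_range_succ] at e1
  have e3 : (β + (n + 1)) * (γ + (n + 1)) *
      (∑ l ∈ Finset.range (n + 1), hT k α β γ l (n + 1) * hS k α β γ w l) =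
      (n + 1) * (α + n) * (k : ℂ) ^ 2 *
      (∑ l ∈ Finset.range (n + 1), hT k α β γ l n * hS k α β γ w l) := by
    rw [Finset.mul_sum, Finset.mul_sum]
    refine Finset.sum_congr rfl fun l _ => ?_
    rw [← mul_assoc, ← mul_assoc, hT_step k hk α β γ hα hβ hγ]
  have e4 := hT_diag k α β γ hα hβ hγ (n + 1)
  push_cast at e4
  linear_combination ((β + (n + 1)) * (γ + (n + 1))) * e1 -
    ((n + 1) * (α + n) * (k : ℂ) ^ 2) * e2 - w * e3 - w * hS k α β γ w (n + 1) * e4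

/-- The sequence `c̃_n` satisfies the three-term recurrence defining the local Heun
solution `Hℓ(1/k², -(w-βγ)/k²; α, β, γ, β+1; z)`, hence `Σ c̃_n zⁿ` is that solution. -/
theorem heun_tilde_coefficients_recurrence (k : ℝ) (hk0 : 0 < k) (hk1 : k < 1)
    (α β γ w : ℂ)
    (hα : ∀ j : ℕ, α ≠ -(j : ℂ)) (hβ : ∀ j : ℕ, β ≠ -(j : ℂ))
    (hγ : ∀ j : ℕ, γ ≠ -(j : ℂ)) :
    heunct k α β γ w 0 = 1 ∧
    γ * heunct k α β γ w 1 = β * γ - w ∧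
    ∀ n : ℕ, 1 ≤ n →
      ((n : ℂ) - 1 + α) * ((n : ℂ) - 1 + β) * heunct k α β γ w (n - 1) -
        ((n : ℂ) * (((n : ℂ) - 1 + γ) * (1 + 1 / (k : ℂ) ^ 2) + (β + 1) / (k : ℂ) ^ 2 +
              α - γ) + (β * γ - w) / (k : ℂ) ^ 2) * heunct k α β γ w n +
        ((n : ℂ) + 1) * ((n : ℂ) + γ) / (k : ℂ) ^ 2 * heunct k α β γ w (n + 1) = 0 := by
  have hk : (k : ℂ) ≠ 0 := by exact_mod_cast hk0.ne'
  have hS0 : hS k α β γ w 0 = 1 := by simp [hS, hG_zero]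
  refine ⟨?_, ?_, ?_⟩
  · rw [heunct_eq, hS0]
    simp [poch]
  · have e := hS_diff k α β γ w 0
    have d := hT_diag k α β γ hα hβ hγ 0
    simp only [Finset.sum_range_succ, Finset.sum_range_zero, hS0, Nat.cast_zero] at e d
    rw [heunct_eq, e]
    simp [poch]
    linear_combination (-w) * d
  · intro n hn
    obtain ⟨n, rfl⟩ : ∃ m, n = m + 1 := ⟨n - 1, by omega⟩
    have r := hS_rec k hk α β γ w hα hβ hγ n
    have h4 : (Nat.factorial n : ℂ) ≠ 0 := by exact_mod_cast Nat.factorial_ne_zero n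
    have h5 : (n : ℂ) + 1 ≠ 0 := by exact_mod_cast Nat.succ_ne_zero n
    have h6 : (n : ℂ) + 1 + 1 ≠ 0 := by exact_mod_cast Nat.succ_ne_zero (n + 1)
    rw [Nat.add_sub_cancel, heunct_eq, heunct_eq, heunct_eq, poch_succ β (n + 1), poch_succ β n,
      Nat.factorial_succ (n + 1), Nat.factorial_succ n]
    push_cast
    generalize hS k α β γ w (n + 1 + 1) = S2 at *
    generalize hS k α β γ w (n + 1) = S1 at *
    generalize hS k α β γ w n = S0 at *
    field_simp
    linear_combination (poch β n * (β + n)) * r
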